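/- arXiv:1707.04745 — 4 statements merged into one kernel-verified Lean document; each statement's English description precedes it below -/
import Mathlib

section
/- Let q : ℝⁿ → ℝ be a real polynomial and let C̃ ≥ 1 be a constant such that for every x ∈ ℝⁿ, Σ_{j∈I_{x,q}} λ_{q,j}(x) ≤ C̃ (M_q(x) + |∇q(x)|²). If q is not constant, then q has no local minimum point in ℝⁿ. -/
open MeasureTheory Filter Topology Metric

noncomputable section

/-- Euclidean space ℝⁿ. -/
abbrev En (n : ℕ) := EuclideanSpace ℝ (Fin n)

/-- First-order partial derivative in direction `i`, as an endomorphism of functions. -/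
noncomputable def pd1 (n : ℕ) (i : Fin n) : Function.End (En n → ℝ) :=
  fun f x => fderiv ℝ f x (EuclideanSpace.single i 1)

/-- Order `|α|` of a multi-index. -/
def mdeg {n : ℕ} (α : Fin n → ℕ) : ℕ := ∑ i, α i

/-- Iterated partial derivative `∂^α`. -/
noncomputable def pdm (n : ℕ) (α : Fin n → ℕ) (f : En n → ℝ) : En n → ℝ :=
  ((List.ofFn fun i : Fin n => (pd1 n i) ^ (α i)).prod) f

/-- The finite set of multi-indices `lo ≤ |α| ≤ k`. -/
def midx (n k lo : ℕ) : Finset (Fin n → ℕ) :=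
  (Finset.Iic fun _ => k).filter fun α => lo ≤ mdeg α ∧ mdeg α ≤ k

/-- `f̃(x) = Σ_{1≤|α|≤k} |∂^α V(x)|^{1/|α|}`. -/
noncomputable def ftil (n k : ℕ) (V : En n → ℝ) (x : En n) : ℝ :=
  ∑ α ∈ midx n k 1, |pdm n α V x| ^ ((1 : ℝ) / (mdeg α))

/-- `f̃_τ(x) = Σ_{1≤|α|≤k} τ^{1/|α|} |∂^α V(x)|^{1/|α|}`. -/
noncomputable def ftilTau (n k : ℕ) (V : En n → ℝ) (τ : ℝ) (x : En n) : ℝ :=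
  ∑ α ∈ midx n k 1, τ ^ ((1 : ℝ) / (mdeg α)) * |pdm n α V x| ^ ((1 : ℝ) / (mdeg α))

/-- Regularized weight `f(x) = Σ_{1≤|α|≤k} (1 + |∂^α V(x)|²)^{1/(2|α|)}`. -/
noncomputable def freg (n k : ℕ) (V : En n → ℝ) (x : En n) : ℝ :=
  ∑ α ∈ midx n k 1, (1 + |pdm n α V x| ^ 2) ^ ((1 : ℝ) / (2 * mdeg α))

/-- The Hessian matrix `(∂_i ∂_j ρ)(x)`. -/
noncomputable def hessM (n : ℕ) (ρ : En n → ℝ) (x : En n) : Matrix (Fin n) (Fin n) ℝ :=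
  fun i j => pd1 n i (pd1 n j ρ) x

/-- Eigenvalues of the Hessian matrix (with value 0 in the degenerate non-symmetric case). -/
noncomputable def hessEig (n : ℕ) (ρ : En n → ℝ) (x : En n) : Fin n → ℝ :=
  if h : (hessM n ρ x).IsHermitian then h.eigenvalues else 0

/-- `Σ_{j ∈ I_{x,ρ}} λ_{ρ,j}(x)`, the sum of the positive eigenvalues of the Hessian. -/
noncomputable def lamPos (n : ℕ) (ρ : En n → ℝ) (x : En n) : ℝ :=
  ∑ j, max (hessEig n ρ x j) 0

/-- `M_ρ(x) = Σ_j max{−λ_{ρ,j}(x), 0}`. -/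
noncomputable def lamNeg (n : ℕ) (ρ : En n → ℝ) (x : En n) : ℝ :=
  ∑ j, max (-(hessEig n ρ x j)) 0

/-- Assumption (i)–(iii) of the paper. -/
def AssumptionA (n k : ℕ) (V : En n → ℝ) : Prop :=
  (∃ C₀ > (1 : ℝ), ∃ δ₁ ∈ Set.Ioo (0 : ℝ) 1, ∀ x : En n,
      lamPos n V x ≤ C₀ * (lamNeg n V x + ‖gradient V x‖ ^ 2
        + (∑ α ∈ midx n k 2, |pdm n α V x| ^ ((2 - δ₁) / (mdeg α))) + 1)) ∧
  (∃ δ₂ ∈ Set.Ioo (0 : ℝ) 1, ∀ α : Fin n → ℕ, mdeg α = k + 1 →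
      ∃ Cα > (0 : ℝ), ∀ x : En n,
        |pdm n α V x| ≤ Cα * (1 + ftil n k V x) ^ ((k : ℝ) + 1 - δ₂)) ∧
  (∀ M : ℝ, ∃ R : ℝ, ∀ x : En n, R ≤ ‖x‖ → M ≤ ftil n k V x)

/-- The Witten-Laplacian quadratic form `Q_{τV}(u) = ∫ |∇u + τ u ∇V|²`. -/
noncomputable def Qform (n : ℕ) (V : En n → ℝ) (τ : ℝ) (u : En n → ℝ) : ℝ :=
  ∫ x : En n, ‖gradient u x + (τ * u x) • gradient V x‖ ^ 2

/-- `u ∈ C_c^∞(ℝⁿ; ℝ)`. -/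
def TestFun (n : ℕ) (u : En n → ℝ) : Prop :=
  ContDiff ℝ (⊤ : ℕ∞) u ∧ HasCompactSupport u

/-- `p` is (given by) a real polynomial of total degree at most `r`. -/
def IsPolyDeg (n r : ℕ) (p : En n → ℝ) : Prop :=
  ∃ P : MvPolynomial (Fin n) ℝ, P.totalDegree ≤ r ∧
    ∀ x : En n, p x = MvPolynomial.eval (fun i => x i) P

/-- `q ∈ L_{p,0}` (limiting polynomials of `p` at `0` of degree at most `r`). -/
def memL (n r : ℕ) (p q : En n → ℝ) : Prop :=
  IsPolyDeg n r q ∧ q 0 = 0 ∧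
  ∃ y : ℕ → En n, ∃ τ h : ℕ → ℝ,
    Tendsto y atTop (nhds 0) ∧ (∀ j, 0 < τ j) ∧ (∀ j, 0 < h j) ∧
    Tendsto τ atTop atTop ∧ Tendsto h atTop (nhds 0) ∧
    ∀ α : Fin n → ℕ, 1 ≤ mdeg α → mdeg α ≤ r →
      Tendsto (fun j => τ j * h j ^ (mdeg α) * pdm n α p (y j)) atTop
        (nhds (pdm n α q 0))


/-- `q` is (given by) a real polynomial. -/
def IsPolyFun (n : ℕ) (q : En n → ℝ) : Prop :=
  ∃ P : MvPolynomial (Fin n) ℝ, ∀ x : En n, q x = MvPolynomial.eval (fun i => x i) P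

/-!
The estimate forces a strong minimum principle for `C²` functions, by Hopf's argument. If `q` is
not constant near a local minimum point `x₀`, some ball near `x₀` on which `q > q x₀` has a
boundary point `z` with `q z = q x₀`. Let `φ` be a barrier at `z`, that is, a function vanishing at
`z` and, elsewhere near `z`, nonnegative only inside that ball. For every small `ε > 0`, `q - ε φ`
has a local minimum near `z`; there `∇q = ε ∇φ` and `Hess q ≥ ε Hess φ`. If the trace of `Hess φ`
is large, the positive eigenvalues of `Hess q` sum to more than `Ct * lamNeg` by a multiple of `ε`,
which the gradient term, of order `ε²`, cannot make up for. Finally, an analytic function which is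
constant near a point is constant.
-/

section SecondDerivativeTest

lemma deriv_deriv_nonneg_of_isLocalMin {f : ℝ → ℝ} {a : ℝ} (hf : ContinuousAt f a)
    (hmin : IsLocalMin f a) : 0 ≤ deriv (deriv f) a := by
  by_contra! hneg
  have hmax : IsLocalMax f a := isLocalMax_of_deriv_deriv_neg hneg hmin.deriv_eq_zero hf
  have hconst : f =ᶠ[𝓝 a] fun _ => f a := by
    filter_upwards [hmin, hmax] with x hge hle using le_antisymm hle hge
  have hzero : deriv (deriv f) a = 0 := by simpa using hconst.deriv.deriv_eq
  exact hneg.ne hzero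

variable {E : Type*} [NormedAddCommGroup E] [NormedSpace ℝ E] {f g : E → ℝ} {x : E}

lemma differentiableAt_fderiv_of_contDiffAt_two (hf : ContDiffAt ℝ 2 f x) :
    DifferentiableAt ℝ (fderiv ℝ f) x :=
  (hf.fderiv_right (m := 1) (by norm_num)).differentiableAt (by norm_num)

lemma deriv_deriv_comp_add_smul (hf : ContDiffAt ℝ 2 f x) (h : E) :
    deriv (deriv fun s : ℝ => f (x + s • h)) 0 = fderiv ℝ (fderiv ℝ f) x h h := by
  have hline (s : ℝ) : HasDerivAt (fun s : ℝ => x + s • h) h s := by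
    simpa using ((hasDerivAt_id s).smul_const h).const_add x
  have hnear : ∀ᶠ s : ℝ in 𝓝 0, ContDiffAt ℝ 2 f (x + s • h) := by
    have htendsto : Tendsto (fun s : ℝ => x + s • h) (𝓝 0) (𝓝 x) :=
      Continuous.tendsto' (by fun_prop) _ _ (by simp)
    exact htendsto.eventually (hf.eventually (by simp))
  have hfirst : deriv (fun s : ℝ => f (x + s • h)) =ᶠ[𝓝 0] fun s => fderiv ℝ f (x + s • h) h := by
    filter_upwards [hnear] with s hs
    have hfs : HasFDerivAt f (fderiv ℝ f (x + s • h)) (x + s • h) :=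
      (hs.differentiableAt (by norm_num)).hasFDerivAt
    exact (hfs.comp_hasDerivAt s (hline s)).deriv
  have hsecond : HasDerivAt (fun s : ℝ => fderiv ℝ f (x + s • h))
      (fderiv ℝ (fderiv ℝ f) x h) 0 := by
    have hfderiv : HasFDerivAt (fderiv ℝ f) (fderiv ℝ (fderiv ℝ f) x) (x + (0 : ℝ) • h) := by
      simpa using (differentiableAt_fderiv_of_contDiffAt_two hf).hasFDerivAt
    exact hfderiv.comp_hasDerivAt 0 (hline 0)
  rw [hfirst.deriv_eq]
  simpa using (hsecond.clm_apply (hasDerivAt_const (0 : ℝ) h)).deriv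

lemma fderiv_fderiv_nonneg_of_isLocalMin (hf : ContDiffAt ℝ 2 f x) (hmin : IsLocalMin f x)
    (h : E) : 0 ≤ fderiv ℝ (fderiv ℝ f) x h h := by
  have hline : ContinuousAt (fun s : ℝ => x + s • h) 0 := by fun_prop
  rw [← deriv_deriv_comp_add_smul hf h]
  refine deriv_deriv_nonneg_of_isLocalMin ?_ ?_
  · exact ContinuousAt.comp (by simpa using hf.continuousAt) hline
  · exact IsMinFilter.comp_tendsto (g := fun s : ℝ => x + s • h) (by simpa [IsLocalMin] using hmin)
      hline.tendsto

lemma fderiv_eq_of_isLocalMin_sub (hf : DifferentiableAt ℝ f x) (hg : DifferentiableAt ℝ g x)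
    (hmin : IsLocalMin (f - g) x) : fderiv ℝ f x = fderiv ℝ g x := by
  rw [← sub_eq_zero, ← fderiv_sub hf hg, hmin.fderiv_eq_zero]

lemma fderiv_fderiv_le_of_isLocalMin_sub (hf : ContDiffAt ℝ 2 f x) (hg : ContDiffAt ℝ 2 g x)
    (hmin : IsLocalMin (f - g) x) (h : E) :
    fderiv ℝ (fderiv ℝ g) x h h ≤ fderiv ℝ (fderiv ℝ f) x h h := by
  have hfirst : fderiv ℝ (f - g) =ᶠ[𝓝 x] fderiv ℝ f - fderiv ℝ g := by
    filter_upwards [hf.eventually (by simp), hg.eventually (by simp)] with y hfy hgy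
    exact fderiv_sub (hfy.differentiableAt (by norm_num)) (hgy.differentiableAt (by norm_num))
  have hnonneg : 0 ≤ fderiv ℝ (fderiv ℝ (f - g)) x h h :=
    fderiv_fderiv_nonneg_of_isLocalMin (hf.sub hg) hmin h
  rw [hfirst.fderiv_eq, fderiv_sub (differentiableAt_fderiv_of_contDiffAt_two hf)
    (differentiableAt_fderiv_of_contDiffAt_two hg)] at hnonneg
  simpa using hnonneg

end SecondDerivativeTest

section Hessian

variable {n : ℕ} {q : En n → ℝ} {x : En n}

lemma hessM_apply (hq : ContDiffAt ℝ 2 q x) (i j : Fin n) :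
    hessM n q x i j = fderiv ℝ (fderiv ℝ q) x (EuclideanSpace.single i 1)
      (EuclideanSpace.single j 1) := by
  unfold hessM pd1
  rw [fderiv_clm_apply (differentiableAt_fderiv_of_contDiffAt_two hq) (by fun_prop)]
  simp

lemma isHermitian_hessM (hq : ContDiffAt ℝ 2 q x) : (hessM n q x).IsHermitian := by
  ext i j
  simpa [hessM_apply hq] using hq.isSymmSndFDerivAt (by simp) _ _

lemma dotProduct_hessM_mulVec (hq : ContDiffAt ℝ 2 q x) (h : En n) :
    ⇑h ⬝ᵥ (hessM n q x).mulVec ⇑h = fderiv ℝ (fderiv ℝ q) x h h := by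
  have hsum : h = ∑ i, h i • (EuclideanSpace.single i (1 : ℝ) : En n) := by
    simpa using ((EuclideanSpace.basisFun (Fin n) ℝ).sum_repr h).symm
  conv_rhs => rw [hsum]
  simp only [map_sum, map_smul, _root_.sum_apply, _root_.smul_apply, smul_eq_mul, dotProduct,
    Matrix.mulVec, hessM_apply hq, Finset.mul_sum]
  rw [Finset.sum_comm]
  refine Finset.sum_congr rfl fun i _ => Finset.sum_congr rfl fun j _ => ?_
  ring

lemma hessEig_eq_eigenvalues (hq : ContDiffAt ℝ 2 q x) :
    hessEig n q x = (isHermitian_hessM hq).eigenvalues :=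
  dif_pos _

lemma lamNeg_nonneg : 0 ≤ lamNeg n q x :=
  Finset.sum_nonneg fun _ _ => le_max_right _ _

lemma trace_hessM_le_lamPos (hq : ContDiffAt ℝ 2 q x) : (hessM n q x).trace ≤ lamPos n q x := by
  rw [(isHermitian_hessM hq).trace_eq_sum_eigenvalues, lamPos, hessEig_eq_eigenvalues hq]
  exact Finset.sum_le_sum fun _ _ => le_max_left _ _

lemma lamNeg_le (hq : ContDiffAt ℝ 2 q x) {c : ℝ} (hc : 0 ≤ c)
    (hbound : ∀ h : En n, -(c * ‖h‖ ^ 2) ≤ fderiv ℝ (fderiv ℝ q) x h h) :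
    lamNeg n q x ≤ n * c := by
  have hH := isHermitian_hessM hq
  have heig (i : Fin n) : -c ≤ hH.eigenvalues i := by
    have hbasis := hbound (hH.eigenvectorBasis i)
    rw [← dotProduct_hessM_mulVec hq] at hbasis
    simpa [hH.eigenvalues_eq, hH.eigenvectorBasis.norm_eq_one i] using hbasis
  calc lamNeg n q x ≤ ∑ _i : Fin n, c := by
        rw [lamNeg, hessEig_eq_eigenvalues hq]
        exact Finset.sum_le_sum fun i _ => max_le (by linarith [heig i]) hc
    _ = n * c := by simp

end Hessian

section Touching

lemma eventually_nhdsGT_zero_mul_lt (c : ℝ) {d : ℝ} (hd : 0 < d) :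
    ∀ᶠ ε in 𝓝[>] (0 : ℝ), ε * c < d := by
  have htendsto : Tendsto (fun ε : ℝ => ε * c) (𝓝[>] 0) (𝓝 0) :=
    (Continuous.tendsto' (by fun_prop) _ _ (by simp)).mono_left nhdsWithin_le_nhds
  exact htendsto.eventually_lt_const hd

lemma eventually_exists_isLocalMin_sub_smul {X : Type*} [PseudoMetricSpace X] [ProperSpace X]
    {f φ : X → ℝ} {z : X} {ρ : ℝ} (hρ : 0 ≤ ρ) (hf : ContinuousOn f (closedBall z ρ))
    (hφ : ContinuousOn φ (closedBall z ρ)) (hφz : φ z = 0)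
    (hle : ∀ x ∈ sphere z ρ, f z ≤ f x) (hlt : ∀ x ∈ sphere z ρ, 0 ≤ φ x → f z < f x) :
    ∀ᶠ ε in 𝓝[>] (0 : ℝ), ∃ x ∈ ball z ρ, IsLocalMin (f - ε • φ) x := by
  set K : Set X := sphere z ρ ∩ φ ⁻¹' Set.Ici 0
  have hKball : K ⊆ closedBall z ρ := Set.inter_subset_left.trans sphere_subset_closedBall
  have hKcompact : IsCompact K := by
    refine (isCompact_closedBall z ρ).of_isClosed_subset ?_ hKball
    exact (hφ.mono sphere_subset_closedBall).preimage_isClosed_of_isClosed isClosed_sphere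
      isClosed_Ici
  obtain ⟨m, hm, hmf⟩ : ∃ m, f z < m ∧ ∀ x ∈ K, m ≤ f x :=
    hKcompact.exists_forall_le' (hf.mono hKball) fun x hx => hlt x hx.1 hx.2
  obtain ⟨M, hM⟩ := hKcompact.bddAbove_image (hφ.mono hKball)
  filter_upwards [eventually_nhdsGT_zero_mul_lt M (sub_pos.2 hm), self_mem_nhdsWithin]
    with ε hε (hε0 : 0 < ε)
  refine exists_isLocalMin_mem_ball (hf.sub (hφ.const_smul ε)) (mem_closedBall_self hρ)
    fun x hx => ?_
  suffices f z < f x - ε * φ x by simpa [hφz] using this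
  rcases lt_or_ge (φ x) 0 with hneg | hnonneg
  · linarith [hle x hx, mul_neg_of_pos_of_neg hε0 hneg]
  · have hφM : ε * φ x ≤ ε * M := by
      gcongr
      exact hM (Set.mem_image_of_mem φ ⟨hx, hnonneg⟩)
    linarith [hmf x ⟨hx, hnonneg⟩]

lemma exists_ball_subset_diff_of_notMem_nhds {X : Type*} [PseudoMetricSpace X] [ProperSpace X]
    {S U : Set X} {x₀ : X} (hS : IsClosed S) (hx₀ : x₀ ∈ S) (hnhds : S ∉ 𝓝 x₀)
    (hU : U ∈ 𝓝 x₀) : ∃ y ∉ S, ∃ z ∈ S, U ∈ 𝓝 z ∧ ball y (dist z y) ⊆ U \ S := by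
  obtain ⟨r, hr, hrU⟩ := Metric.mem_nhds_iff.1 hU
  obtain ⟨y, hy, hyS⟩ : ∃ y ∈ ball x₀ (r / 2), y ∉ S :=
    Set.not_subset.1 fun hsub => hnhds (mem_of_superset (ball_mem_nhds x₀ (half_pos hr)) hsub)
  obtain ⟨z, hz, hyz⟩ := hS.exists_infDist_eq_dist ⟨x₀, hx₀⟩ y
  rw [mem_ball] at hy
  have hzy : dist z y < r / 2 := by
    rw [dist_comm, ← hyz]
    exact (infDist_le_dist_of_mem hx₀).trans_lt hy
  refine ⟨y, hyS, z, hz, mem_of_superset (isOpen_ball.mem_nhds ?_) hrU, fun x hx => ⟨hrU ?_, ?_⟩⟩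
  · rw [mem_ball]
    linarith [dist_triangle z y x₀]
  · rw [mem_ball] at hx ⊢
    linarith [dist_triangle x y x₀]
  · refine ball_infDist_subset_compl (x := y) ?_
    rwa [hyz, dist_comm]

end Touching

section Barrier

variable {E : Type*} [NormedAddCommGroup E] [InnerProductSpace ℝ E]

/-- Barrier for Hopf's boundary point argument at a boundary point `z` of the ball of centre
`z + v` and radius `‖v‖`: it vanishes at `z` and, elsewhere near `z`, is nonnegative only inside
that ball, while for large `A` its Hessian has a large positive trace. Being quadratic, it avoids
the usual exponential. -/
def hopfBarrier (A : ℝ) (v z x : E) : ℝ :=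
  inner ℝ v (x - z) + A * inner ℝ v (x - z) ^ 2 - ‖x - z‖ ^ 2

variable {A : ℝ} {v z x : E}

@[simp]
lemma hopfBarrier_self : hopfBarrier A v z z = 0 := by
  simp [hopfBarrier]

lemma contDiff_hopfBarrier {k : WithTop ℕ∞} : ContDiff ℝ k (hopfBarrier A v z) := by
  have hsub : ContDiff ℝ k fun y : E => y - z := by fun_prop
  have hinner : ContDiff ℝ k fun y : E => inner ℝ v (y - z) := contDiff_const.inner ℝ hsub
  exact (hinner.add (contDiff_const.mul (hinner.pow 2))).sub (hsub.norm_sq ℝ)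

lemma differentiable_hopfBarrier : Differentiable ℝ (hopfBarrier A v z) :=
  contDiff_hopfBarrier.differentiable one_ne_zero

lemma abs_mul_inner_le {ρ c : ℝ} (hA : 0 ≤ A) (hρ : ρ * (A * ‖v‖) ≤ c) (hx : ‖x‖ ≤ ρ) :
    |A * inner ℝ v x| ≤ c :=
  calc |A * inner ℝ v x| ≤ A * (‖v‖ * ‖x‖) := by
        rw [abs_mul, abs_of_nonneg hA]
        gcongr
        exact abs_real_inner_le_norm v x
    _ ≤ A * (‖v‖ * ρ) := by gcongr
    _ = ρ * (A * ‖v‖) := by ring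
    _ ≤ c := hρ

lemma mem_ball_of_hopfBarrier_nonneg (hxz : x ≠ z) (hx : |A * inner ℝ v (x - z)| ≤ 1 / 2)
    (hφ : 0 ≤ hopfBarrier A v z x) : x ∈ ball (z + v) ‖v‖ := by
  have hnorm : 0 < ‖x - z‖ ^ 2 := pow_pos (norm_pos_iff.2 (sub_ne_zero.2 hxz)) 2
  unfold hopfBarrier at hφ
  obtain ⟨hlow, hhigh⟩ := abs_le.1 hx
  set t : ℝ := inner ℝ v (x - z)
  have hfactor : ‖x - z‖ ^ 2 ≤ t * (1 + A * t) := by linarith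
  have ht : 0 < t := pos_of_mul_pos_left (hnorm.trans_le hfactor) (by linarith)
  have hinner : ‖x - z‖ ^ 2 < 2 * t :=
    calc ‖x - z‖ ^ 2 ≤ t * (1 + A * t) := hfactor
      _ < t * 2 := by gcongr; linarith
      _ = 2 * t := mul_comm t 2
  have hdist : ‖x - (z + v)‖ ^ 2 = ‖x - z‖ ^ 2 - 2 * t + ‖v‖ ^ 2 := by
    rw [← sub_sub, norm_sub_sq_real, real_inner_comm]
  rw [mem_ball, dist_eq_norm]
  exact lt_of_pow_lt_pow_left₀ 2 (norm_nonneg v) (by linarith)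

lemma eventually_exists_isLocalMin_sub_hopfBarrier [ProperSpace E] {f : E → ℝ} {ρ : ℝ}
    (hA : 0 ≤ A) (hρ0 : 0 < ρ) (hρ : ρ * (A * ‖v‖) ≤ 1 / 2) (hf : ContinuousOn f (closedBall z ρ))
    (hle : ∀ x ∈ closedBall z ρ, f z ≤ f x) (hlt : ∀ x ∈ ball (z + v) ‖v‖, f z < f x) :
    ∀ᶠ ε in 𝓝[>] (0 : ℝ), ∃ x ∈ ball z ρ, IsLocalMin (f - ε • hopfBarrier A v z) x := by
  refine eventually_exists_isLocalMin_sub_smul hρ0.le hf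
    differentiable_hopfBarrier.continuous.continuousOn hopfBarrier_self
    (fun x hx => hle x (sphere_subset_closedBall hx)) fun x hx hφ => hlt x ?_
  exact mem_ball_of_hopfBarrier_nonneg (ne_of_mem_sphere hx hρ0.ne')
    (abs_mul_inner_le hA hρ (mem_sphere_iff_norm.1 hx).le) hφ

lemma hasFDerivAt_inner_sub (v z x : E) :
    HasFDerivAt (fun y => inner ℝ v (y - z)) (innerSL ℝ v) x :=
  (innerSL ℝ v).hasFDerivAt.comp x ((hasFDerivAt_id x).sub_const z)

lemma fderiv_hopfBarrier (A : ℝ) (v z : E) :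
    fderiv ℝ (hopfBarrier A v z) = fun x =>
      (1 + 2 * (A * inner ℝ v (x - z))) • innerSL ℝ v - (2 : ℝ) • innerSL ℝ (x - z) := by
  ext x h
  have hinner := hasFDerivAt_inner_sub v z x
  have hnorm := ((hasFDerivAt_id x).sub_const z).norm_sq
  have hbarrier : HasFDerivAt (hopfBarrier A v z) _ x :=
    (hinner.add ((hinner.pow 2).const_mul A)).sub hnorm
  rw [hbarrier.fderiv]
  simp only [Nat.add_one_sub_one, pow_one, nsmul_eq_mul, Nat.cast_ofNat, id_eq,
    ContinuousLinearMap.comp_id, _root_.sub_apply, _root_.add_apply, coe_innerSL_apply,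
    _root_.smul_apply, smul_eq_mul]
  ring

lemma norm_fderiv_hopfBarrier_le (hx : |A * inner ℝ v (x - z)| ≤ 1 / 2) :
    ‖fderiv ℝ (hopfBarrier A v z) x‖ ≤ 2 * (‖v‖ + ‖x - z‖) := by
  have hcoeff : |1 + 2 * (A * inner ℝ v (x - z))| ≤ 2 := by
    obtain ⟨hlow, hhigh⟩ := abs_le.1 hx
    exact abs_le.2 ⟨by linarith, by linarith⟩
  rw [fderiv_hopfBarrier]
  calc _ ≤ |1 + 2 * (A * inner ℝ v (x - z))| * ‖v‖ + 2 * ‖x - z‖ := by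
        refine (norm_sub_le _ _).trans_eq ?_
        simp [norm_smul, innerSL_apply_norm, -map_sub]
    _ ≤ 2 * ‖v‖ + 2 * ‖x - z‖ := by gcongr
    _ = 2 * (‖v‖ + ‖x - z‖) := by ring

lemma fderiv_fderiv_hopfBarrier (A : ℝ) (v z x h : E) :
    fderiv ℝ (fderiv ℝ (hopfBarrier A v z)) x h h = 2 * (A * inner ℝ v h ^ 2 - ‖h‖ ^ 2) := by
  have hrank_one : HasFDerivAt
      (fun y => (1 + 2 * (A * inner ℝ v (y - z))) • innerSL ℝ v) _ x :=
    ((((hasFDerivAt_inner_sub v z x).const_mul A).const_mul 2).const_add 1).smul_const _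
  have hlinear : HasFDerivAt (fun y => (2 : ℝ) • innerSL ℝ (y - z)) ((2 : ℝ) • innerSL ℝ) x :=
    ((innerSL ℝ).hasFDerivAt.comp x ((hasFDerivAt_id x).sub_const z)).const_smul (2 : ℝ)
  rw [fderiv_hopfBarrier, (hrank_one.fun_sub hlinear).fderiv]
  change (2 * (A * inner ℝ v h)) * inner ℝ v h - 2 * inner ℝ h h = _
  rw [real_inner_self_eq_norm_sq]
  ring

end Barrier

section StrongMinimumPrinciple

variable {n : ℕ} {q : En n → ℝ} {x v z : En n} {A ε : ℝ}

lemma norm_gradient_le_of_isLocalMin_sub_hopfBarrier (hq : DifferentiableAt ℝ q x) (hε : 0 ≤ ε)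
    (hmin : IsLocalMin (q - ε • hopfBarrier A v z) x)
    (hx : |A * inner ℝ v (x - z)| ≤ 1 / 2) :
    ‖gradient q x‖ ≤ ε * (2 * (‖v‖ + ‖x - z‖)) := by
  have hφ : DifferentiableAt ℝ (hopfBarrier A v z) x := differentiable_hopfBarrier x
  calc ‖gradient q x‖ = ‖fderiv ℝ q x‖ := by simp [gradient]
    _ = ε * ‖fderiv ℝ (hopfBarrier A v z) x‖ := by
        rw [fderiv_eq_of_isLocalMin_sub hq (hφ.const_smul ε) hmin, fderiv_const_smul hφ,
          norm_smul, Real.norm_of_nonneg hε]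
    _ ≤ ε * (2 * (‖v‖ + ‖x - z‖)) := by
        gcongr
        exact norm_fderiv_hopfBarrier_le hx

lemma le_fderiv_fderiv_of_isLocalMin_sub_hopfBarrier (hq : ContDiffAt ℝ 2 q x)
    (hmin : IsLocalMin (q - ε • hopfBarrier A v z) x) (h : En n) :
    ε * (2 * (A * inner ℝ v h ^ 2 - ‖h‖ ^ 2)) ≤ fderiv ℝ (fderiv ℝ q) x h h := by
  have hsmul : fderiv ℝ (ε • hopfBarrier A v z) = ε • fderiv ℝ (hopfBarrier A v z) :=
    funext fun y => fderiv_const_smul (differentiable_hopfBarrier y) ε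
  have hφ : DifferentiableAt ℝ (fderiv ℝ (hopfBarrier A v z)) x :=
    differentiableAt_fderiv_of_contDiffAt_two contDiff_hopfBarrier.contDiffAt
  calc ε * (2 * (A * inner ℝ v h ^ 2 - ‖h‖ ^ 2))
      = fderiv ℝ (fderiv ℝ (ε • hopfBarrier A v z)) x h h := by
        rw [hsmul, fderiv_const_smul hφ, ← fderiv_fderiv_hopfBarrier A v z x h]
        rfl
    _ ≤ fderiv ℝ (fderiv ℝ q) x h h :=
        fderiv_fderiv_le_of_isLocalMin_sub hq (contDiff_hopfBarrier.contDiffAt.const_smul ε) hmin h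

lemma le_lamPos_of_isLocalMin_sub_hopfBarrier (hq : ContDiffAt ℝ 2 q x)
    (hmin : IsLocalMin (q - ε • hopfBarrier A v z) x) :
    ε * (2 * (A * ‖v‖ ^ 2 - n)) ≤ lamPos n q x := by
  have hcoord (i : Fin n) : inner ℝ v (EuclideanSpace.single i (1 : ℝ)) = v i := by
    simp [EuclideanSpace.inner_single_right]
  calc ε * (2 * (A * ‖v‖ ^ 2 - n))
      = ∑ i, ε * (2 * (A * inner ℝ v (EuclideanSpace.single i (1 : ℝ)) ^ 2
          - ‖(EuclideanSpace.single i (1 : ℝ) : En n)‖ ^ 2)) := by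
        simp [hcoord, ← Finset.mul_sum, Finset.sum_sub_distrib, EuclideanSpace.norm_sq_eq]
    _ ≤ (hessM n q x).trace := by
        refine Finset.sum_le_sum fun i _ => ?_
        rw [Matrix.diag_apply, hessM_apply hq]
        exact le_fderiv_fderiv_of_isLocalMin_sub_hopfBarrier hq hmin _
    _ ≤ lamPos n q x := trace_hessM_le_lamPos hq

lemma lamNeg_le_of_isLocalMin_sub_hopfBarrier (hq : ContDiffAt ℝ 2 q x) (hε : 0 ≤ ε)
    (hA : 0 ≤ A) (hmin : IsLocalMin (q - ε • hopfBarrier A v z) x) :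
    lamNeg n q x ≤ n * (2 * ε) := by
  refine lamNeg_le hq (by positivity) fun h => ?_
  calc -(2 * ε * ‖h‖ ^ 2) ≤ ε * (2 * (A * inner ℝ v h ^ 2 - ‖h‖ ^ 2)) := by
        have : 0 ≤ ε * (A * inner ℝ v h ^ 2) := by positivity
        linarith
    _ ≤ fderiv ℝ (fderiv ℝ q) x h h :=
        le_fderiv_fderiv_of_isLocalMin_sub_hopfBarrier hq hmin h

lemma estimate_lt_lamPos_of_isLocalMin_sub_hopfBarrier {C ρ : ℝ} (hq : ContDiffAt ℝ 2 q x)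
    (hε : 0 < ε) (hA : 0 ≤ A) (hAv : A * ‖v‖ ^ 2 = n + |C| * n + 1)
    (hρ : ρ * (A * ‖v‖) ≤ 1 / 2) (hxz : ‖x - z‖ ≤ ρ)
    (hsmall : ε * (|C| * (2 * (‖v‖ + ρ)) ^ 2) < 2)
    (hmin : IsLocalMin (q - ε • hopfBarrier A v z) x) :
    C * (lamNeg n q x + ‖gradient q x‖ ^ 2) < lamPos n q x := by
  have hneg := lamNeg_le_of_isLocalMin_sub_hopfBarrier hq hε.le hA hmin
  have hgrad : ‖gradient q x‖ ≤ ε * (2 * (‖v‖ + ρ)) := by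
    refine (norm_gradient_le_of_isLocalMin_sub_hopfBarrier (hq.differentiableAt (by norm_num))
      hε.le hmin (abs_mul_inner_le hA hρ hxz)).trans ?_
    gcongr
  calc C * (lamNeg n q x + ‖gradient q x‖ ^ 2)
      ≤ |C| * (lamNeg n q x + ‖gradient q x‖ ^ 2) := by
        have := lamNeg_nonneg (q := q) (x := x)
        gcongr
        exact le_abs_self C
    _ ≤ |C| * (n * (2 * ε) + (ε * (2 * (‖v‖ + ρ))) ^ 2) := by gcongr
    _ = ε * (2 * (|C| * n) + ε * (|C| * (2 * (‖v‖ + ρ)) ^ 2)) := by ring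
    _ < ε * (2 * (|C| * n) + 2) := by gcongr
    _ = ε * (2 * (A * ‖v‖ ^ 2 - n)) := by rw [hAv]; ring
    _ ≤ lamPos n q x := le_lamPos_of_isLocalMin_sub_hopfBarrier hq hmin

lemma exists_estimate_lt_lamPos {U : Set (En n)} {y : En n} (C : ℝ)
    (hq : ∀ x ∈ U, ContDiffAt ℝ 2 q x) (hU : U ∈ 𝓝 z) (hmin : ∀ x ∈ U, q z ≤ q x) (hyz : y ≠ z)
    (hball : ∀ x ∈ ball y (dist z y), q z < q x) :
    ∃ x ∈ U, C * (lamNeg n q x + ‖gradient q x‖ ^ 2) < lamPos n q x := by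
  set v := y - z with hv
  have hv0 : 0 < ‖v‖ := norm_pos_iff.2 (sub_ne_zero.2 hyz)
  obtain ⟨A, hA, hAv⟩ : ∃ A : ℝ, 0 ≤ A ∧ A * ‖v‖ ^ 2 = n + |C| * n + 1 :=
    ⟨(n + |C| * n + 1) / ‖v‖ ^ 2, by positivity, by field_simp⟩
  have hradius : ∀ᶠ ρ in 𝓝[>] (0 : ℝ), closedBall z ρ ⊆ U ∧ ρ * (A * ‖v‖) < 1 / 2 :=
    ((eventually_closedBall_subset hU).filter_mono nhdsWithin_le_nhds).and
      (eventually_nhdsGT_zero_mul_lt _ one_half_pos)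
  obtain ⟨ρ, ⟨hρU, hρ⟩, hρ0⟩ := (hradius.and self_mem_nhdsWithin).exists
  have htouch := eventually_exists_isLocalMin_sub_hopfBarrier hA hρ0 hρ.le
    (fun x hx => (hq x (hρU hx)).continuousAt.continuousWithinAt) (fun x hx => hmin x (hρU hx))
    (by simpa [hv, ← dist_eq_norm, dist_comm z] using hball)
  have hsmall := eventually_nhdsGT_zero_mul_lt (|C| * (2 * (‖v‖ + ρ)) ^ 2) two_pos
  obtain ⟨ε, ⟨⟨x, hxρ, hxmin⟩, hε⟩, hε0⟩ := ((htouch.and hsmall).and self_mem_nhdsWithin).exists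
  have hxball := ball_subset_closedBall hxρ
  exact ⟨x, hρU hxball, estimate_lt_lamPos_of_isLocalMin_sub_hopfBarrier (hq x (hρU hxball)) hε0 hA
    hAv hρ.le (mem_closedBall_iff_norm.1 hxball) hε hxmin⟩

theorem eventuallyEq_const_of_isLocalMin_of_lamPos_le {C : ℝ} (hq : ContDiffAt ℝ 2 q x)
    (hest : ∀ᶠ y in 𝓝 x, lamPos n q y ≤ C * (lamNeg n q y + ‖gradient q y‖ ^ 2))
    (hmin : IsLocalMin q x) : q =ᶠ[𝓝 x] fun _ => q x := by
  obtain ⟨r, hr, hball⟩ := nhds_basis_closedBall.eventually_iff.1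
    ((hq.eventually (by simp)).and (hest.and hmin))
  have hclosed : IsClosed (closedBall x r ∩ q ⁻¹' {q x}) :=
    ContinuousOn.preimage_isClosed_of_isClosed
      (fun y hy => (hball hy).1.continuousAt.continuousWithinAt) isClosed_closedBall
      isClosed_singleton
  by_contra hne
  obtain ⟨y, hy, z, hzS, hzU, hsub⟩ :=
    exists_ball_subset_diff_of_notMem_nhds hclosed ⟨mem_closedBall_self hr.le, rfl⟩
      (fun hmem => hne (mem_of_superset hmem Set.inter_subset_right)) (closedBall_mem_nhds x hr)
  have hz : q z = q x := hzS.2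
  have hyz : y ≠ z := fun heq => hy (heq ▸ hzS)
  have hle (p : En n) (hp : p ∈ closedBall x r) : q z ≤ q p := hz ▸ (hball hp).2.2
  have hlt (p : En n) (hp : p ∈ ball y (dist z y)) : q z < q p :=
    (hle p (hsub hp).1).lt_of_ne fun heq => (hsub hp).2 ⟨(hsub hp).1, heq.symm.trans hz⟩
  obtain ⟨p, hp, hviolate⟩ :=
    exists_estimate_lt_lamPos C (fun p hp => (hball hp).1) hzU hle hyz hlt
  exact hviolate.not_ge (hball hp).2.1

end StrongMinimumPrinciple

lemma IsPolyFun.analyticOnNhd {n : ℕ} {q : En n → ℝ} (hq : IsPolyFun n q) :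
    AnalyticOnNhd ℝ q Set.univ := by
  obtain ⟨P, hP⟩ := hq
  rw [show q = fun x : En n => MvPolynomial.eval (fun i => x i) P from funext hP]
  exact AnalyticOnNhd.eval_continuousLinearMap
    (EuclideanSpace.equiv (Fin n) ℝ : En n →L[ℝ] (Fin n → ℝ)) P

theorem poly_eigenvalue_estimate_no_local_min_general {n : ℕ} {q : En n → ℝ} {U : Set (En n)}
    (hU : IsOpen U) (hUc : IsPreconnected U) (hq : AnalyticOnNhd ℝ q U) {C : ℝ}
    (hest : ∀ x ∈ U, lamPos n q x ≤ C * (lamNeg n q x + ‖gradient q x‖ ^ 2))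
    (hnc : ¬ ∃ c : ℝ, ∀ x ∈ U, q x = c) :
    ∀ x ∈ U, ¬ IsLocalMin q x := by
  intro x hx hmin
  have hlocal : q =ᶠ[𝓝 x] fun _ => q x :=
    eventuallyEq_const_of_isLocalMin_of_lamPos_le (hq x hx).contDiffAt
      (eventually_of_mem (hU.mem_nhds hx) hest) hmin
  exact hnc ⟨q x, hq.eqOn_of_preconnected_of_eventuallyEq analyticOnNhd_const hUc hx hlocal⟩

/-- a nonconstant polynomial satisfying the eigenvalue estimate has no
local minimum. -/
theorem poly_eigenvalue_estimate_no_local_min (n : ℕ) (q : En n → ℝ)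
    (hq : IsPolyFun n q) (Ct : ℝ) (hCt : 1 ≤ Ct)
    (hest : ∀ x : En n, lamPos n q x ≤ Ct * (lamNeg n q x + ‖gradient q x‖ ^ 2))
    (hnc : ¬ ∃ c : ℝ, ∀ x : En n, q x = c) :
    ∀ x : En n, ¬ IsLocalMin q x := by
  simpa using poly_eigenvalue_estimate_no_local_min_general isOpen_univ isPreconnected_univ
    hq.analyticOnNhd (fun x _ => hest x) (by simpa using hnc)

end
end

section
/- Let r ≥ 1 and let p be a real polynomial on ℝⁿ of degree at most r. Let y_j ∈ ℝⁿ with y_j → 0, and let τ_j, h_j be positive real numbers with τ_j → +∞ and h_j → 0. Suppose that for every multi-index α with 1 ≤ |α| ≤ r the limit c_α = lim_{j→∞} τ_j h_j^{|α|} ∂^α p(y_j) exists in ℝ, and define the polynomial q(x) = Σ_{1≤|α|≤r} (c_α/α!) x^α. Then for every multi-index α with |α| ≥ 1 and every x ∈ ℝⁿ one has lim_{j→∞} τ_j h_j^{|α|} (∂^α p)(y_j + h_j x) = ∂^α q(x), and moreover lim_{j→∞} τ_j [p(y_j + h_j x) − p(y_j)] = q(x) for every x ∈ ℝⁿ. 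-/
open MeasureTheory Filter Topology Metric

noncomputable section

/-!
A polynomial of degree at most `r` is determined, up to its constant term, by its derivatives of
orders `1, …, r` at the origin. Applied to the rescaled polynomials
`Q_j(x) = τ_j (p(y_j + h_j x) - p(y_j))`, whose derivatives at the origin are
`τ_j h_j^|α| ∂^α p(y_j)` by the chain rule, this writes `Q_j` as a combination of finitely many
fixed monomials whose coefficients converge to those of `q`. Hence every linear functional of `Q_j`
converges to its value at `q`, in particular evaluation at `x` and `P ↦ ∂^α P(x)`.
-/

section IteratedPDeriv

open MvPolynomial

variable {σ R : Type*} [CommSemiring R]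

/-- The composite of the operators `∂_i ^ α i` on polynomials, for `i` running through a list.
Keeping the list explicit allows induction on it. -/
def pderivList (α : σ → ℕ) (L : List σ) : Module.End R (MvPolynomial σ R) :=
  (L.map fun i => (pderiv i).toLinearMap ^ α i).prod

/-- The multi-index derivative `∂^α` on polynomials, with the factors in the order used by
`pdm`. -/
def iteratedPDeriv {n : ℕ} (α : Fin n → ℕ) : Module.End R (MvPolynomial (Fin n) R) :=
  pderivList α (List.finRange n)

lemma pderivList_cons (α : σ → ℕ) (i : σ) (L : List σ) (P : MvPolynomial σ R) :
    pderivList α (i :: L) P = ((pderiv i).toLinearMap ^ α i) (pderivList α L P) := by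
  simp only [pderivList, List.map_cons, List.prod_cons, Module.End.mul_apply]

lemma coeff_pderiv_pow (i : σ) (k : ℕ) (γ : σ →₀ ℕ) (P : MvPolynomial σ R) :
    coeff γ (((pderiv i).toLinearMap ^ k) P) =
      (γ i + k).descFactorial k * coeff (γ + Finsupp.single i k) P := by
  induction k generalizing P with
  | zero => simp
  | succ k ih =>
    rw [pow_succ, Module.End.mul_apply, ih, Derivation.coeFn_coe, coeff_pderiv,
      add_assoc, ← Finsupp.single_add, ← add_assoc (γ i), Nat.succ_descFactorial_succ]
    simp only [Finsupp.coe_add, Pi.add_apply, Finsupp.single_eq_same]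
    push_cast
    ring

lemma coeff_pderivList (α : σ → ℕ) {L : List σ} (hL : L.Nodup) (γ : σ →₀ ℕ)
    (P : MvPolynomial σ R) :
    coeff γ (pderivList α L P) =
      (L.map fun i => ((γ i + α i).descFactorial (α i) : R)).prod *
        coeff (γ + (L.map fun i => Finsupp.single i (α i)).sum) P := by
  induction L generalizing γ with
  | nil => simp [pderivList]
  | cons i L ih =>
    have hγ : ∀ j ∈ L, (γ + Finsupp.single i (α i)) j = γ j := fun j hj => by
      simp [Finsupp.single_eq_of_ne (ne_of_mem_of_not_mem hj hL.notMem)]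
    rw [pderivList_cons, coeff_pderiv_pow, ih hL.of_cons,
      List.map_congr_left fun j hj => by rw [hγ j hj]]
    simp only [List.map_cons, List.prod_cons, List.sum_cons, mul_assoc, add_assoc]

lemma constantCoeff_iteratedPDeriv {n : ℕ} (γ : Fin n →₀ ℕ) (P : MvPolynomial (Fin n) R) :
    constantCoeff (iteratedPDeriv γ P) = ((∏ i, (γ i).factorial : ℕ) : R) * coeff γ P := by
  have hγ : ((List.finRange n).map fun i => Finsupp.single i (γ i)).sum = γ := by
    rw [← List.ofFn_eq_map, List.sum_ofFn, Finsupp.univ_sum_single]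
  rw [constantCoeff_eq, iteratedPDeriv, coeff_pderivList γ (List.nodup_finRange n), hγ, zero_add,
    ← List.ofFn_eq_map, List.prod_ofFn]
  simp [Nat.descFactorial_self]

end IteratedPDeriv

section AffineSubst

open MvPolynomial

variable {σ R : Type*} [CommSemiring R]

/-- The substitution `P(x) ↦ P(y + h x)` on polynomials. -/
def affineSubst (y : σ → R) (h : R) : MvPolynomial σ R →ₐ[R] MvPolynomial σ R :=
  aeval fun i => C (y i) + h • X i

lemma eval_affineSubst (y : σ → R) (h : R) (x : σ → R) (P : MvPolynomial σ R) :
    eval x (affineSubst y h P) = eval (y + h • x) P := by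
  simp only [affineSubst, ← aeval_eq_eval, comp_aeval_apply]
  congr 2
  ext i
  simp

lemma pderiv_affineSubst (y : σ → R) (h : R) (i : σ) (P : MvPolynomial σ R) :
    pderiv i (affineSubst y h P) = h • affineSubst y h (pderiv i P) := by
  induction P using MvPolynomial.induction_on with
  | C a => simp [affineSubst, algebraMap_eq]
  | add P Q hP hQ => simp only [map_add, hP, hQ, smul_add]
  | mul_X P j hP =>
    have hX : pderiv i (affineSubst y h (X j)) = h • affineSubst y h (pderiv i (X j)) := by
      classical
      rcases eq_or_ne j i with rfl | hij
      · simp [affineSubst]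
      · simp [affineSubst, pderiv_X_of_ne hij]
    simp only [map_mul, pderiv_mul, hP, hX, map_add, smul_add, smul_mul_assoc, mul_smul_comm]

lemma pderiv_pow_affineSubst (y : σ → R) (h : R) (i : σ) (k : ℕ) (P : MvPolynomial σ R) :
    ((pderiv i).toLinearMap ^ k) (affineSubst y h P) =
      h ^ k • affineSubst y h (((pderiv i).toLinearMap ^ k) P) := by
  induction k generalizing P with
  | zero => simp
  | succ k ih =>
    simp only [pow_succ, Module.End.mul_apply, Derivation.coeFn_coe,
      pderiv_affineSubst, map_smul] at ih ⊢
    rw [ih, smul_smul, mul_comm]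

lemma pderivList_affineSubst (y : σ → R) (h : R) (α : σ → ℕ) (L : List σ) (P : MvPolynomial σ R) :
    pderivList α L (affineSubst y h P) =
      h ^ (L.map α).sum • affineSubst y h (pderivList α L P) := by
  induction L with
  | nil => simp [pderivList]
  | cons i L ih =>
    rw [pderivList_cons, ih, map_smul, pderiv_pow_affineSubst, smul_smul, pderivList_cons,
      List.map_cons, List.sum_cons, pow_add, mul_comm]

lemma totalDegree_aeval_le {τ : Type*} {f : σ → MvPolynomial τ R} {m : ℕ}
    (hf : ∀ i, (f i).totalDegree ≤ m) (P : MvPolynomial σ R) :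
    (aeval f P).totalDegree ≤ P.totalDegree * m := by
  rw [aeval_def, eval₂_eq]
  refine totalDegree_finsetSum_le fun d hd => (totalDegree_mul _ _).trans ?_
  rw [algebraMap_eq, totalDegree_C, zero_add]
  calc (∏ i ∈ d.support, f i ^ d i).totalDegree
      ≤ ∑ i ∈ d.support, (f i ^ d i).totalDegree := totalDegree_finsetProd _ _
    _ ≤ ∑ i ∈ d.support, d i * m :=
        Finset.sum_le_sum fun i _ =>
          (totalDegree_pow _ _).trans (Nat.mul_le_mul_left (d i) (hf i))
    _ = (∑ i ∈ d.support, d i) * m := (Finset.sum_mul ..).symm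
    _ ≤ P.totalDegree * m := Nat.mul_le_mul_right m (le_totalDegree hd)

lemma totalDegree_affineSubst_le (y : σ → R) (h : R) (P : MvPolynomial σ R) :
    (affineSubst y h P).totalDegree ≤ P.totalDegree := by
  have hX : ∀ i, (C (y i) + h • X i : MvPolynomial σ R).totalDegree ≤ 1 := fun i =>
    (totalDegree_add _ _).trans <| max_le (by simp) <|
      (totalDegree_smul_le _ _).trans <|
        (totalDegree_monomial_le (Finsupp.single i 1) (1 : R)).trans (by simp)
  simpa only [affineSubst, mul_one] using totalDegree_aeval_le hX P

lemma iteratedPDeriv_affineSubst {n : ℕ} (y : Fin n → R) (h : R) (α : Fin n → ℕ)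
    (P : MvPolynomial (Fin n) R) :
    iteratedPDeriv α (affineSubst y h P) =
      h ^ mdeg α • affineSubst y h (iteratedPDeriv α P) := by
  rw [iteratedPDeriv, pderivList_affineSubst, ← List.ofFn_eq_map, List.sum_ofFn, mdeg]

lemma iteratedPDeriv_C {n : ℕ} {α : Fin n → ℕ} (hα : 1 ≤ mdeg α) (a : R) :
    iteratedPDeriv α (C a) = 0 := by
  -- A constant is invariant under the degenerate substitution `x ↦ 0`, so `∂^α` scales it by `0`.
  have hC : (C a : MvPolynomial (Fin n) R) = affineSubst 0 0 (C a) := by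
    simp [affineSubst, algebraMap_eq]
  rw [hC, iteratedPDeriv_affineSubst, zero_pow (Nat.one_le_iff_ne_zero.1 hα), zero_smul]

end AffineSubst

section TaylorSum

open MvPolynomial

variable {K : Type*} [Field K] {n : ℕ}

/-- The polynomial `Σ_{1 ≤ |α| ≤ r} (c_α / α!) x^α`; in characteristic zero its derivatives at the
origin of orders `1, …, r` are the `c_α`. -/
def taylorSum (r : ℕ) (c : (Fin n → ℕ) → K) : MvPolynomial (Fin n) K :=
  ∑ α ∈ midx n r 1,
    (c α / ((∏ i, (α i).factorial : ℕ) : K)) • monomial (Finsupp.equivFunOnFinite.symm α) 1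

lemma mem_midx {r lo : ℕ} {α : Fin n → ℕ} : α ∈ midx n r lo ↔ lo ≤ mdeg α ∧ mdeg α ≤ r := by
  simp only [midx, Finset.mem_filter, Finset.mem_Iic, and_iff_right_iff_imp]
  rintro ⟨_, hr⟩ i
  exact (Finset.single_le_sum (fun _ _ => Nat.zero_le _) (Finset.mem_univ i)).trans hr

lemma eval_taylorSum (r : ℕ) (c : (Fin n → ℕ) → K) (x : Fin n → K) :
    eval x (taylorSum r c) =
      ∑ α ∈ midx n r 1, c α / ((∏ i, (α i).factorial : ℕ) : K) * ∏ i, x i ^ α i := by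
  simp [taylorSum, smul_eval, eval_monomial, Finsupp.prod_fintype]

lemma coeff_taylorSum (r : ℕ) (c : (Fin n → ℕ) → K) (γ : Fin n →₀ ℕ) :
    coeff γ (taylorSum r c) =
      if ⇑γ ∈ midx n r 1 then c γ / ((∏ i, (γ i).factorial : ℕ) : K) else 0 := by
  simp only [taylorSum, coeff_sum, coeff_smul, coeff_monomial, Equiv.symm_apply_eq, smul_eq_mul,
    mul_ite, mul_one, mul_zero, Finset.sum_ite_eq', Finsupp.equivFunOnFinite_apply]
  rfl

lemma sub_C_constantCoeff_eq_taylorSum [CharZero K] {r : ℕ} {P : MvPolynomial (Fin n) K}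
    (hP : P.totalDegree ≤ r) :
    P - C (constantCoeff P) = taylorSum r fun α => constantCoeff (iteratedPDeriv α P) := by
  ext γ
  have hfact : ((∏ i, (γ i).factorial : ℕ) : K) ≠ 0 :=
    Nat.cast_ne_zero.2 <| Finset.prod_ne_zero_iff.2 fun i _ => (γ i).factorial_ne_zero
  have hdeg : mdeg γ = γ.degree := (Finsupp.degree_eq_sum γ).symm
  rw [coeff_taylorSum, constantCoeff_iteratedPDeriv, mul_div_cancel_left₀ _ hfact, coeff_sub,
    coeff_C]
  simp only [mem_midx, hdeg]
  rcases eq_or_ne γ 0 with rfl | hγ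
  · simp [constantCoeff_eq]
  · have hpos : 1 ≤ γ.degree := Nat.one_le_iff_ne_zero.2 <| (Finsupp.degree_eq_zero_iff γ).not.2 hγ
    simp only [hγ.symm, if_false, sub_zero, hpos, true_and]
    split_ifs with hr
    · rfl
    · exact coeff_eq_zero_of_totalDegree_lt (hP.trans_lt (not_le.1 hr))

lemma smul_affineSubst_sub_C_eq_taylorSum [CharZero K] {r : ℕ} {P : MvPolynomial (Fin n) K}
    (hP : P.totalDegree ≤ r) (y : Fin n → K) (τ h : K) :
    τ • (affineSubst y h P - C (eval y P)) =
      taylorSum r fun α => τ * h ^ mdeg α * eval y (iteratedPDeriv α P) := by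
  have hconst : ∀ Q, constantCoeff (affineSubst y h Q) = eval y Q := fun Q => by
    rw [← eval_zero, eval_affineSubst, smul_zero, add_zero]
  have hQ : (τ • affineSubst y h P).totalDegree ≤ r :=
    (totalDegree_smul_le _ _).trans <| (totalDegree_affineSubst_le y h P).trans hP
  simpa [smul_sub, smul_eq_C_mul (C _), hconst, iteratedPDeriv_affineSubst, mul_assoc] using
    sub_C_constantCoeff_eq_taylorSum hQ

lemma tendsto_linearMap_taylorSum [TopologicalSpace K] [ContinuousAdd K] [ContinuousMul K]
    {ι : Type*} {l : Filter ι} {r : ℕ} {a : ι → (Fin n → ℕ) → K} {c : (Fin n → ℕ) → K}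
    (ha : ∀ α, 1 ≤ mdeg α → mdeg α ≤ r → Tendsto (fun j => a j α) l (𝓝 (c α)))
    (T : MvPolynomial (Fin n) K →ₗ[K] K) :
    Tendsto (fun j => T (taylorSum r (a j))) l (𝓝 (T (taylorSum r c))) := by
  simp only [taylorSum, map_sum, map_smul, smul_eq_mul]
  refine tendsto_finsetSum _ fun α hα => ?_
  obtain ⟨hpos, hr⟩ := mem_midx.1 hα
  exact ((ha α hpos hr).div_const _).mul_const _

end TaylorSum

section PolynomialFunctions

open MvPolynomial

lemma hasFDerivAt_eval {𝕜 E σ : Type*} [NontriviallyNormedField 𝕜] [NormedAddCommGroup E]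
    [NormedSpace 𝕜 E] [Fintype σ] (ℓ : σ → E →L[𝕜] 𝕜) (P : MvPolynomial σ 𝕜) (x : E) :
    HasFDerivAt (fun x => eval (fun i => ℓ i x) P)
      (∑ i, eval (fun i => ℓ i x) (pderiv i P) • ℓ i) x := by
  classical
  induction P using MvPolynomial.induction_on with
  | C a =>
    simp only [eval_C]
    refine (hasFDerivAt_const a x).congr_fderiv ?_
    ext v
    simp
  | add P Q hP hQ =>
    simp only [map_add]
    refine (hP.add hQ).congr_fderiv ?_
    ext v
    simp [add_mul, Finset.sum_add_distrib]
  | mul_X P i hP =>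
    simp only [map_mul, eval_X]
    refine (hP.mul (ℓ i).hasFDerivAt).congr_fderiv ?_
    ext v
    simp [pderiv_X, Pi.single_apply, apply_ite, add_mul, Finset.sum_add_distrib, Finset.mul_sum,
      mul_assoc]

variable {n : ℕ}

/-- The function on `ℝⁿ` defined by a polynomial. -/
def polyFun (P : MvPolynomial (Fin n) ℝ) : En n → ℝ :=
  fun x => eval x.ofLp P

lemma pd1_polyFun (i : Fin n) (P : MvPolynomial (Fin n) ℝ) :
    pd1 n i (polyFun P) = polyFun (pderiv i P) := by
  ext x
  have hP : HasFDerivAt (polyFun P) _ x :=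
    hasFDerivAt_eval (fun i => (EuclideanSpace.proj i : En n →L[ℝ] ℝ)) P x
  rw [pd1, hP.fderiv]
  simp [polyFun]

lemma pd1_pow_polyFun (i : Fin n) (k : ℕ) (P : MvPolynomial (Fin n) ℝ) :
    (pd1 n i ^ k) (polyFun P) = polyFun (((pderiv i).toLinearMap ^ k) P) := by
  induction k generalizing P with
  | zero => rfl
  | succ k ih =>
    calc (pd1 n i ^ (k + 1)) (polyFun P)
        = (pd1 n i ^ k) (pd1 n i (polyFun P)) := by rw [pow_succ]; rfl
      _ = polyFun (((pderiv i).toLinearMap ^ (k + 1)) P) := by rw [pd1_polyFun, ih, pow_succ]; rfl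

lemma pdm_polyFun (α : Fin n → ℕ) (P : MvPolynomial (Fin n) ℝ) :
    pdm n α (polyFun P) = polyFun (iteratedPDeriv α P) := by
  rw [pdm, iteratedPDeriv, List.ofFn_eq_map]
  induction List.finRange n with
  | nil => rfl
  | cons i L ih =>
    rw [List.map_cons, List.prod_cons, pderivList_cons, ← pd1_pow_polyFun, ← ih]
    rfl

end PolynomialFunctions

open MvPolynomial in
theorem limiting_polynomial_convergence_general {n r : ℕ} (p : En n → ℝ) (hp : IsPolyDeg n r p)
    {ι : Type*} {l : Filter ι} (y : ι → En n) (τ h : ι → ℝ) (c : (Fin n → ℕ) → ℝ)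
    (hc : ∀ α : Fin n → ℕ, 1 ≤ mdeg α → mdeg α ≤ r →
      Tendsto (fun j => τ j * h j ^ mdeg α * pdm n α p (y j)) l (𝓝 (c α)))
    (q : En n → ℝ)
    (hq : ∀ x : En n, q x = ∑ α ∈ midx n r 1,
      (c α / ((∏ i, (α i).factorial : ℕ) : ℝ)) * ∏ i, x i ^ α i) :
    (∀ α : Fin n → ℕ, 1 ≤ mdeg α → ∀ x : En n,
      Tendsto (fun j => τ j * h j ^ mdeg α * pdm n α p (y j + h j • x)) l (𝓝 (pdm n α q x))) ∧
    (∀ x : En n,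
      Tendsto (fun j => τ j * (p (y j + h j • x) - p (y j))) l (𝓝 (q x))) := by
  obtain ⟨P, hP, hpP⟩ := hp
  obtain rfl : p = polyFun P := funext hpP
  obtain rfl : q = polyFun (taylorSum r c) := funext fun x => by rw [hq, polyFun, eval_taylorSum]
  simp only [pdm_polyFun, polyFun] at hc ⊢
  have key : ∀ T : MvPolynomial (Fin n) ℝ →ₗ[ℝ] ℝ, Tendsto
      (fun j => T (τ j • (affineSubst (y j).ofLp (h j) P - C (eval (y j).ofLp P))))
      l (𝓝 (T (taylorSum r c))) := fun T => by
    simpa only [smul_affineSubst_sub_C_eq_taylorSum hP] using tendsto_linearMap_taylorSum hc T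
  refine ⟨fun α hα x => ?_, fun x => ?_⟩
  · simpa [aeval_eq_eval, iteratedPDeriv_C hα, iteratedPDeriv_affineSubst, eval_affineSubst,
      mul_assoc] using
      key ((aeval x.ofLp).toLinearMap ∘ₗ iteratedPDeriv α)
  · simpa [aeval_eq_eval, eval_affineSubst] using key (aeval x.ofLp).toLinearMap

/-- convergence of rescaled derivatives to the limiting polynomial. -/
theorem limiting_polynomial_convergence (n r : ℕ) (hr : 1 ≤ r)
    (p : En n → ℝ) (hp : IsPolyDeg n r p)
    (y : ℕ → En n) (τ h : ℕ → ℝ)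
    (hy : Tendsto y atTop (nhds 0)) (hτpos : ∀ j, 0 < τ j) (hhpos : ∀ j, 0 < h j)
    (hτ : Tendsto τ atTop atTop) (hh : Tendsto h atTop (nhds 0))
    (c : (Fin n → ℕ) → ℝ)
    (hc : ∀ α : Fin n → ℕ, 1 ≤ mdeg α → mdeg α ≤ r →
      Tendsto (fun j => τ j * h j ^ mdeg α * pdm n α p (y j)) atTop (nhds (c α)))
    (q : En n → ℝ)
    (hq : ∀ x : En n, q x = ∑ α ∈ midx n r 1,
      (c α / ((∏ i, (α i).factorial : ℕ) : ℝ)) * ∏ i, x i ^ α i) :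
    (∀ α : Fin n → ℕ, 1 ≤ mdeg α → ∀ x : En n,
      Tendsto (fun j => τ j * h j ^ mdeg α * pdm n α p (y j + h j • x)) atTop
        (nhds (pdm n α q x))) ∧
    (∀ x : En n,
      Tendsto (fun j => τ j * (p (y j + h j • x) - p (y j))) atTop (nhds (q x))) :=
  limiting_polynomial_convergence_general p hp y τ h c hc q hq

end
end

section
/- For every real δ ≠ 0, let V_δ : ℝ² → ℝ be defined by V_δ(x₁, x₂) = x₁²x₂² + δ(x₁² + x₂²). Then there exists a constant C > 0 (depending on δ) such that for all (x₁, x₂) ∈ ℝ²: ΔV_δ(x) = 2x₁² + 2x₂² + 4δ ≤ C (1 + |∇V_δ(x)|²). -/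
open MeasureTheory Filter Topology Metric

noncomputable section

/-!
With `s = x₁² + x₂²` and `p = x₁² x₂²`, expanding the squares gives
`|∇V_δ|² / 4 = δ² s + p (s + 4 δ)`. Where `s + 4 δ ≥ 0` the last term is nonnegative, so
`s ≤ |∇V_δ|² / (4 δ²)`; elsewhere `s < -4 δ`, so `ΔV_δ = 2 s + 4 δ` is bounded by a constant.
-/

theorem mul_add_sq_add_mul_add_sq {R : Type*} [CommRing R] (δ a b : R) :
    a * (b + δ) ^ 2 + b * (a + δ) ^ 2 = δ ^ 2 * (a + b) + a * b * (a + b + 4 * δ) := by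
  ring

theorem sq_mul_add_le_mul_add_sq_add_mul_add_sq {R : Type*} [CommRing R] [PartialOrder R]
    [IsOrderedRing R] {δ a b : R} (ha : 0 ≤ a) (hb : 0 ≤ b) (h : 0 ≤ a + b + 4 * δ) :
    δ ^ 2 * (a + b) ≤ a * (b + δ) ^ 2 + b * (a + δ) ^ 2 := by
  rw [mul_add_sq_add_mul_add_sq]
  exact le_add_of_nonneg_right (mul_nonneg (mul_nonneg ha hb) h)

theorem two_mul_add_add_four_mul_le {K : Type*} [Field K] [LinearOrder K] [IsStrictOrderedRing K]
    {δ a b : K} (hδ : δ ≠ 0) (ha : 0 ≤ a) (hb : 0 ≤ b) :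
    2 * (a + b) + 4 * δ ≤
      4 * |δ| + 2 * ((a * (b + δ) ^ 2 + b * (a + δ) ^ 2) / δ ^ 2) := by
  have hδ_sq : 0 < δ ^ 2 := by positivity
  rcases le_total 0 (a + b + 4 * δ) with h | h
  · have h_sum : a + b ≤ (a * (b + δ) ^ 2 + b * (a + δ) ^ 2) / δ ^ 2 :=
      (le_div_iff₀' hδ_sq).2 (sq_mul_add_le_mul_add_sq_add_mul_add_sq ha hb h)
    linarith [le_abs_self δ]
  · have h_quot : 0 ≤ (a * (b + δ) ^ 2 + b * (a + δ) ^ 2) / δ ^ 2 := by positivity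
    linarith [neg_le_abs δ]

/-- for `V_δ(x) = x₁²x₂² + δ(x₁² + x₂²)` with `δ ≠ 0`, the Laplacian
is controlled by `1 + |∇V_δ|²`. -/
theorem Vdelta_laplacian_controlled (δ : ℝ) (hδ : δ ≠ 0) :
    ∃ C > (0 : ℝ), ∀ x₁ x₂ : ℝ,
      2 * x₁ ^ 2 + 2 * x₂ ^ 2 + 4 * δ
        ≤ C * (1 + (4 * x₁ ^ 2 * (x₂ ^ 2 + δ) ^ 2
            + 4 * x₂ ^ 2 * (x₁ ^ 2 + δ) ^ 2)) := by
  refine ⟨4 * |δ| + 1 / (2 * δ ^ 2), by positivity, fun x₁ x₂ => ?_⟩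
  set N := 4 * x₁ ^ 2 * (x₂ ^ 2 + δ) ^ 2 + 4 * x₂ ^ 2 * (x₁ ^ 2 + δ) ^ 2 with hN
  have hN_nonneg : 0 ≤ N := by positivity
  calc 2 * x₁ ^ 2 + 2 * x₂ ^ 2 + 4 * δ
      = 2 * (x₁ ^ 2 + x₂ ^ 2) + 4 * δ := by ring
    _ ≤ 4 * |δ| + 2 * ((x₁ ^ 2 * (x₂ ^ 2 + δ) ^ 2 + x₂ ^ 2 * (x₁ ^ 2 + δ) ^ 2) / δ ^ 2) :=
      two_mul_add_add_four_mul_le hδ (sq_nonneg x₁) (sq_nonneg x₂)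
    _ = 4 * |δ| * 1 + 1 / (2 * δ ^ 2) * N := by rw [hN]; ring
    _ ≤ 4 * |δ| * (1 + N) + 1 / (2 * δ ^ 2) * (1 + N) := by gcongr <;> linarith
    _ = (4 * |δ| + 1 / (2 * δ ^ 2)) * (1 + N) := (add_mul _ _ _).symm

end
end

section
/- For every real δ with δ ≠ 0 and δ ≠ −1, let Φ_δ : ℝ² → ℝ be defined by Φ_δ(x₁, x₂) = (x₁² − x₂)² + δx₂². Then there exists a constant C > 0 (depending on δ) such that for all x = (x₁, x₂) ∈ ℝ²: |12x₁² − 4x₂| + |4x₁| + |2(1 + δ)x₂| ≤ C (1 + |∇Φ_δ(x)|); in particular every entry of the Hessian matrix of Φ_δ at x is bounded in absolute value by C (1 + |∇Φ_δ(x)|). -/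
open MeasureTheory Filter Topology Metric

noncomputable section

/-!
The combination `(1 + δ) ∂₁Φ_δ + 2 x₁ ∂₂Φ_δ = 4 δ x₁³` does not involve `x₂`. As `δ ≠ 0`, it bounds
`|x₁|³` by `O(|∇Φ_δ|) (1 + |x₁|)`, and dividing by `|x₁|` when `|x₁| ≥ 1` gives
`x₁² = O(1 + |∇Φ_δ|)`. As `δ ≠ -1`, the identity `2 (1 + δ) x₂ = 2 x₁² + ∂₂Φ_δ` then bounds `x₂`
in the same way, and the expressions to be estimated grow at most like `1 + x₁² + |x₂|`.
-/

theorem mul_pow_le_max_of_mul_pow_succ_le {R : Type*} [CommRing R] [LinearOrder R]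
    [IsStrictOrderedRing R] {a b c t : R} {n : ℕ} (ha : 0 ≤ a) (hc : 0 ≤ c) (ht : 0 ≤ t)
    (h : c * t ^ (n + 1) ≤ a + b * t) : c * t ^ n ≤ max c (a + b) := by
  rcases le_total t 1 with ht1 | ht1
  · exact le_max_of_le_left (mul_le_of_le_one_right hc (pow_le_one₀ ht ht1))
  · have h_mul : c * t ^ n * t ≤ (a + b) * t :=
      calc c * t ^ n * t = c * t ^ (n + 1) := by ring
        _ ≤ a + b * t := h
        _ ≤ a * t + b * t := by gcongr; exact le_mul_of_one_le_right ha ht1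
        _ = (a + b) * t := by ring
    exact le_max_of_le_right (le_of_mul_le_mul_right h_mul (zero_lt_one.trans_le ht1))

section Ring

variable {R : Type*} [CommRing R]

/-- The partial derivative `∂Φ_δ/∂x₁` at `(x, y)`, which is independent of `δ`. It is defined by its
formula, so that it makes sense over any ring. -/
def phideltaPartial₁ (x y : R) : R := 4 * x * (x ^ 2 - y)

/-- The partial derivative `∂Φ_δ/∂x₂` at `(x, y)`, defined by its formula like
`phideltaPartial₁`. -/
def phideltaPartial₂ (δ x y : R) : R := -2 * (x ^ 2 - y) + 2 * δ * y

theorem one_add_mul_phideltaPartial₁_add (δ x y : R) :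
    (1 + δ) * phideltaPartial₁ x y + 2 * x * phideltaPartial₂ δ x y = 4 * δ * x ^ 3 := by
  unfold phideltaPartial₁ phideltaPartial₂
  ring

theorem two_mul_sq_add_phideltaPartial₂ (δ x y : R) :
    2 * x ^ 2 + phideltaPartial₂ δ x y = 2 * (1 + δ) * y := by
  unfold phideltaPartial₂
  ring

variable [LinearOrder R]

/-- The sup norm of the gradient of `Φ_δ` at `(x, y)`. Unlike the Euclidean norm it needs no square
roots, and it is the smaller of the two. -/
def phideltaGradSup (δ x y : R) : R := max |phideltaPartial₁ x y| |phideltaPartial₂ δ x y|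

theorem abs_phideltaPartial₁_le (δ x y : R) : |phideltaPartial₁ x y| ≤ phideltaGradSup δ x y :=
  le_max_left _ _

theorem abs_phideltaPartial₂_le (δ x y : R) : |phideltaPartial₂ δ x y| ≤ phideltaGradSup δ x y :=
  le_max_right _ _

variable [IsStrictOrderedRing R]

theorem phideltaGradSup_nonneg (δ x y : R) : 0 ≤ phideltaGradSup δ x y :=
  (abs_nonneg _).trans (abs_phideltaPartial₁_le δ x y)

theorem four_mul_abs_mul_abs_pow_three_le (δ x y : R) :
    4 * |δ| * |x| ^ 3 ≤
      |1 + δ| * phideltaGradSup δ x y + 2 * phideltaGradSup δ x y * |x| :=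
  calc 4 * |δ| * |x| ^ 3
      = |(1 + δ) * phideltaPartial₁ x y + 2 * x * phideltaPartial₂ δ x y| := by
        simp [one_add_mul_phideltaPartial₁_add, abs_mul]
    _ ≤ |1 + δ| * |phideltaPartial₁ x y| + 2 * |phideltaPartial₂ δ x y| * |x| := by
        refine (abs_add_le _ _).trans_eq ?_
        simp only [abs_mul, abs_two]
        ring
    _ ≤ |1 + δ| * phideltaGradSup δ x y + 2 * phideltaGradSup δ x y * |x| := by
        gcongr
        · exact abs_phideltaPartial₁_le δ x y
        · exact abs_phideltaPartial₂_le δ x y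

theorem four_mul_abs_mul_sq_le (δ x y : R) :
    4 * |δ| * x ^ 2 ≤ max (4 * |δ|) ((|1 + δ| + 2) * phideltaGradSup δ x y) := by
  rw [← sq_abs x, add_mul]
  exact mul_pow_le_max_of_mul_pow_succ_le
    (mul_nonneg (abs_nonneg _) (phideltaGradSup_nonneg δ x y)) (by positivity) (abs_nonneg x)
    (four_mul_abs_mul_abs_pow_three_le δ x y)

theorem two_mul_abs_one_add_mul_abs_le (δ x y : R) :
    2 * |1 + δ| * |y| ≤ 2 * x ^ 2 + phideltaGradSup δ x y :=
  calc 2 * |1 + δ| * |y| = |2 * x ^ 2 + phideltaPartial₂ δ x y| := by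
        simp [two_mul_sq_add_phideltaPartial₂, abs_mul]
    _ ≤ 2 * x ^ 2 + |phideltaPartial₂ δ x y| := by
        refine (abs_add_le _ _).trans_eq ?_
        rw [abs_of_nonneg (by positivity : 0 ≤ 2 * x ^ 2)]
    _ ≤ 2 * x ^ 2 + phideltaGradSup δ x y := by
        gcongr
        exact abs_phideltaPartial₂_le δ x y

theorem abs_phidelta_hessian_entries_le (δ x y : R) :
    |12 * x ^ 2 - 4 * y| + |4 * x| + |2 * (1 + δ) * y| ≤
      2 + 14 * x ^ 2 + (4 + 2 * |1 + δ|) * |y| := by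
  have h₁₁ : |12 * x ^ 2 - 4 * y| ≤ 12 * x ^ 2 + 4 * |y| := by
    refine (abs_sub _ _).trans_eq ?_
    rw [abs_of_nonneg (by positivity : 0 ≤ 12 * x ^ 2), abs_mul, Nat.abs_ofNat]
  have h₁₂ : |4 * x| ≤ 2 + 2 * x ^ 2 := by
    rw [abs_mul, Nat.abs_ofNat, ← sq_abs x]
    linarith [sq_nonneg (|x| - 1)]
  have h₂₂ : |2 * (1 + δ) * y| = 2 * |1 + δ| * |y| := by simp [abs_mul]
  linarith

end Ring

section OrderedField

variable {K : Type*} [Field K] [LinearOrder K] [IsStrictOrderedRing K] {δ : K}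

theorem exists_sq_le_mul_one_add_phideltaGradSup (hδ : δ ≠ 0) :
    ∃ A > 0, ∀ x y : K, x ^ 2 ≤ A * (1 + phideltaGradSup δ x y) := by
  have hδ_pos : 0 < 4 * |δ| := by positivity
  refine ⟨(4 * |δ| + (|1 + δ| + 2)) / (4 * |δ|), by positivity, fun x y ↦ ?_⟩
  have hG := phideltaGradSup_nonneg δ x y
  rw [div_mul_eq_mul_div, le_div_iff₀' hδ_pos]
  refine (four_mul_abs_mul_sq_le δ x y).trans (max_le ?_ ?_)
  · nlinarith [abs_nonneg (1 + δ)]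
  · nlinarith [abs_nonneg (1 + δ)]

theorem exists_abs_le_mul_one_add_phideltaGradSup (hδ : δ ≠ 0) (hδ' : δ ≠ -1) :
    ∃ B > 0, ∀ x y : K, |y| ≤ B * (1 + phideltaGradSup δ x y) := by
  obtain ⟨A, hA, hx⟩ := exists_sq_le_mul_one_add_phideltaGradSup hδ
  have hδ'_pos : 0 < 2 * |1 + δ| := by
    have : 1 + δ ≠ 0 := fun h ↦ hδ' (eq_neg_of_add_eq_zero_right h)
    positivity
  refine ⟨(2 * A + 1) / (2 * |1 + δ|), by positivity, fun x y ↦ ?_⟩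
  rw [div_mul_eq_mul_div, le_div_iff₀' hδ'_pos]
  linarith [two_mul_abs_one_add_mul_abs_le δ x y, hx x y]

theorem Phidelta_hessian_controlled_general (hδ : δ ≠ 0) (hδ' : δ ≠ -1) :
    ∃ C > 0, ∀ x y : K,
      |12 * x ^ 2 - 4 * y| + |4 * x| + |2 * (1 + δ) * y| ≤ C * (1 + phideltaGradSup δ x y) := by
  obtain ⟨A, hA, hx⟩ := exists_sq_le_mul_one_add_phideltaGradSup hδ
  obtain ⟨B, hB, hy⟩ := exists_abs_le_mul_one_add_phideltaGradSup hδ hδ'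
  refine ⟨2 + 14 * A + (4 + 2 * |1 + δ|) * B, by positivity, fun x y ↦ ?_⟩
  have hG := phideltaGradSup_nonneg δ x y
  calc |12 * x ^ 2 - 4 * y| + |4 * x| + |2 * (1 + δ) * y|
      ≤ 2 + 14 * x ^ 2 + (4 + 2 * |1 + δ|) * |y| := abs_phidelta_hessian_entries_le δ x y
    _ ≤ 2 * (1 + phideltaGradSup δ x y) + 14 * (A * (1 + phideltaGradSup δ x y)) +
          (4 + 2 * |1 + δ|) * (B * (1 + phideltaGradSup δ x y)) := by
        gcongr
        · linarith
        · exact hx x y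
        · exact hy x y
    _ = (2 + 14 * A + (4 + 2 * |1 + δ|) * B) * (1 + phideltaGradSup δ x y) := by ring

end OrderedField

theorem phideltaGradSup_le_sqrt (δ x y : ℝ) :
    phideltaGradSup δ x y ≤ √(phideltaPartial₁ x y ^ 2 + phideltaPartial₂ δ x y ^ 2) :=
  max_le (Real.abs_le_sqrt (le_add_of_nonneg_right (sq_nonneg _)))
    (Real.abs_le_sqrt (le_add_of_nonneg_left (sq_nonneg _)))

/-- for `Φ_δ(x) = (x₁² − x₂)² + δx₂²` with `δ ≠ 0, −1`, the entries of
the Hessian are controlled by `1 + |∇Φ_δ|`. -/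
theorem Phidelta_hessian_controlled (δ : ℝ) (hδ : δ ≠ 0) (hδ' : δ ≠ -1) :
    ∃ C > (0 : ℝ), ∀ x₁ x₂ : ℝ,
      |12 * x₁ ^ 2 - 4 * x₂| + |4 * x₁| + |2 * (1 + δ) * x₂|
        ≤ C * (1 + Real.sqrt ((4 * x₁ * (x₁ ^ 2 - x₂)) ^ 2
            + (-2 * (x₁ ^ 2 - x₂) + 2 * δ * x₂) ^ 2)) := by
  obtain ⟨C, hC, h⟩ := Phidelta_hessian_controlled_general hδ hδ'
  exact ⟨C, hC, fun x₁ x₂ ↦ (h x₁ x₂).trans (by gcongr; exact phideltaGradSup_le_sqrt δ x₁ x₂)⟩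

end
end
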